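/- arXiv:1802.07837 — 2 statements merged into one kernel-verified Lean document; each statement's English description precedes it below -/
import Mathlib

section
/- Let n ≥ 4. If K is a subgroup of the hyperoctahedral group Bₙ = C₂ⁿ ⋊ Sₙ of index n, then up to conjugacy K equals C₂ⁿ ⋊ Sₙ₋₁ (the stabilizer of the last coordinate axis in the permutation part), or n = 4 and K = C₂⁴⁺ ⋊ A₄, or n = 6 and K = C₂⁶ ⋊ PGL₂(5). -/
open Equiv SemidirectProduct

/-- The action of permutations on sign vectors by permuting coordinates. -/
def permAction (n : ℕ) : Perm (Fin n) →* MulAut (Fin n → ℤˣ) where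
  toFun σ := MulEquiv.arrowCongr σ (MulEquiv.refl ℤˣ)
  map_one' := by ext v i; rfl
  map_mul' σ τ := by ext v i; rfl

/-- The hyperoctahedral group `Bₙ = C₂ⁿ ⋊ Sₙ` as a semidirect product. -/
abbrev HyperOct (n : ℕ) := (Fin n → ℤˣ) ⋊[permAction n] Perm (Fin n)

/-- The product-of-signs homomorphism `C₂ⁿ → {±1}`. -/
def prodHom (n : ℕ) : (Fin n → ℤˣ) →* ℤˣ := ∏ i : Fin n, Pi.evalMonoidHom (fun _ => ℤˣ) i

/-- The subgroup `C₂ⁿ⁺` of even sign vectors (an even number of `-1` entries). -/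
def evenSign (n : ℕ) : Subgroup (Fin n → ℤˣ) := (prodHom n).ker

/-- The subgroup `V ⋊ P` of `Bₙ` determined by a subgroup `V` of sign vectors and a
subgroup `P` of permutations. -/
def mix {n : ℕ} (V : Subgroup (Fin n → ℤˣ)) (P : Subgroup (Perm (Fin n))) :
    Subgroup (HyperOct n) :=
  V.map (inl : _ →* HyperOct n) ⊔ P.map (inr : _ →* HyperOct n)


instance : Fact (Nat.Prime 5) := ⟨by norm_num⟩

abbrev ProjLine5 := Projectivization (ZMod 5) (Fin 2 → ZMod 5)

/-- The linear automorphism of `GF(5)²` given by a matrix in `GL₂(GF(5))`. -/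
noncomputable def glLin : GL (Fin 2) (ZMod 5) →* ((Fin 2 → ZMod 5) ≃ₗ[ZMod 5] (Fin 2 → ZMod 5)) :=
  (LinearMap.GeneralLinearGroup.generalLinearEquiv (ZMod 5) (Fin 2 → ZMod 5)).toMonoidHom.comp
    (Matrix.GeneralLinearGroup.toLin).toMonoidHom

lemma glLin_comp (g h : GL (Fin 2) (ZMod 5)) :
    (glLin g).toLinearMap.comp (glLin h).toLinearMap = (glLin (g * h)).toLinearMap := by
  ext v
  simp [map_mul]

lemma glLin_one : (glLin (1 : GL (Fin 2) (ZMod 5))).toLinearMap = LinearMap.id := by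
  ext v
  simp [map_one]

lemma pmap_congr {A B : (Fin 2 → ZMod 5) →ₗ[ZMod 5] (Fin 2 → ZMod 5)}
    (hA : Function.Injective A) (hB : Function.Injective B) (hAB : A = B) :
    Projectivization.map A hA = Projectivization.map B hB := by
  subst hAB; rfl

/-- The permutation of the projective line `ℙ¹(GF(5))` induced by an element of
`GL₂(GF(5))`. -/
noncomputable def glPerm (g : GL (Fin 2) (ZMod 5)) : Equiv.Perm ProjLine5 where
  toFun := Projectivization.map (glLin g).toLinearMap (glLin g).injective
  invFun := Projectivization.map (glLin g⁻¹).toLinearMap (glLin g⁻¹).injective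
  left_inv x := by
    have key : (Projectivization.map (glLin g⁻¹).toLinearMap (glLin g⁻¹).injective) ∘
        (Projectivization.map (glLin g).toLinearMap (glLin g).injective) = id := by
      rw [← Projectivization.map_comp,
        pmap_congr _
          (glLin (g⁻¹ * g)).injective (glLin_comp g⁻¹ g),
        pmap_congr (glLin (g⁻¹ * g)).injective (glLin 1).injective (by rw [inv_mul_cancel]),
        pmap_congr (glLin 1).injective Function.injective_id glLin_one,
        Projectivization.map_id]
    exact congrFun key x
  right_inv x := by
    have key : (Projectivization.map (glLin g).toLinearMap (glLin g).injective) ∘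
        (Projectivization.map (glLin g⁻¹).toLinearMap (glLin g⁻¹).injective) = id := by
      rw [← Projectivization.map_comp,
        pmap_congr _
          (glLin (g * g⁻¹)).injective (glLin_comp g g⁻¹),
        pmap_congr (glLin (g * g⁻¹)).injective (glLin 1).injective (by rw [mul_inv_cancel]),
        pmap_congr (glLin 1).injective Function.injective_id glLin_one,
        Projectivization.map_id]
    exact congrFun key x

/-- The action homomorphism `GL₂(GF(5)) → Sym(ℙ¹(GF(5)))`; its image is `PGL₂(5)` acting
on the projective line. -/
noncomputable def glPermHom : GL (Fin 2) (ZMod 5) →* Equiv.Perm ProjLine5 where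
  toFun := glPerm
  map_one' := by
    ext x
    show Projectivization.map (glLin 1).toLinearMap (glLin 1).injective x = x
    rw [pmap_congr (glLin 1).injective Function.injective_id glLin_one,
      Projectivization.map_id]
    rfl
  map_mul' g h := by
    ext x
    show Projectivization.map (glLin (g * h)).toLinearMap (glLin (g * h)).injective x = _
    have key : Projectivization.map (glLin (g * h)).toLinearMap (glLin (g * h)).injective =
        (Projectivization.map (glLin g).toLinearMap (glLin g).injective) ∘
          (Projectivization.map (glLin h).toLinearMap (glLin h).injective) := by
      rw [← Projectivization.map_comp,
        pmap_congr _
          (glLin (g * h)).injective (glLin_comp g h)]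
    exact congrFun key x

/-- Transport of permutation groups along a bijection, as a group homomorphism. -/
def permCongrHom {α β : Type*} (f : α ≃ β) : Equiv.Perm α →* Equiv.Perm β where
  toFun σ := f.symm.trans (σ.trans f)
  map_one' := by ext x; simp
  map_mul' σ τ := by ext x; simp

/-- The copy of `PGL₂(5)` inside the symmetric group on `Fin n`, obtained from an
identification `f` of the `n` points with the projective line over `GF(5)`. -/
noncomputable def pglSubgroup {n : ℕ} (f : Fin n ≃ ProjLine5) : Subgroup (Equiv.Perm (Fin n)) :=
  glPermHom.range.map (permCongrHom f.symm)


lemma hyp_le_stab_eq {n : ℕ} (hn : 4 ≤ n) (H : Subgroup (Perm (Fin n))) (hH : H.index = n)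
    (x : Fin n) (h : H ≤ MulAction.stabilizer (Perm (Fin n)) x) :
    H = MulAction.stabilizer (Perm (Fin n)) x := by
  have h1 : (MulAction.stabilizer (Perm (Fin n)) x).index = n := by
    rw [MulAction.index_stabilizer_of_transitive]; simp
  have h2 := Subgroup.relIndex_mul_index h
  rw [h1, hH] at h2
  have h3 : H.relIndex (MulAction.stabilizer (Perm (Fin n)) x) = 1 := by
    have : 0 < n := by omega
    nlinarith
  exact le_antisymm h (Subgroup.relIndex_eq_one.mp h3)

lemma hyp_intransitive {n : ℕ} (hn : 4 ≤ n) (H : Subgroup (Perm (Fin n))) (hH : H.index = n)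
    (hT : ¬ MulAction.IsPretransitive H (Fin n)) :
    ∃ x : Fin n, H = MulAction.stabilizer (Perm (Fin n)) x := by
  classical
  obtain ⟨x, hx⟩ : ∃ x : Fin n, MulAction.orbit H x ≠ Set.univ := by
    by_contra! hc
    exact hT ⟨fun a b => by
      have : b ∈ MulAction.orbit H a := by rw [hc a]; trivial
      exact this⟩
  set O := MulAction.orbit H x with hO
  have hOinv : ∀ h ∈ H, ∀ z, (h z ∈ O ↔ z ∈ O) := by
    intro h hh z
    have e : h z ∈ MulAction.orbit H z := ⟨⟨h, hh⟩, rfl⟩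
    have e2 := MulAction.orbit_eq_iff.2 e
    rw [hO, ← MulAction.orbit_eq_iff, ← MulAction.orbit_eq_iff, e2]
  by_contra! hne
  have hcompl : ∃ y, y ∉ O := by
    by_contra! hc
    exact hx (Set.eq_univ_of_forall hc)
  obtain ⟨y, hy⟩ := hcompl
  have hxO : x ∈ O := MulAction.mem_orbit_self x
  have h1 : ∃ x' ∈ O, x' ≠ x := by
    by_contra! hc
    refine hne x (hyp_le_stab_eq hn H hH x fun h hh => ?_)
    exact hc _ ((hOinv h hh x).2 hxO)
  have h2 : ∃ y', y' ∉ O ∧ y' ≠ y := by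
    by_contra! hc
    refine hne y (hyp_le_stab_eq hn H hH y fun h hh => ?_)
    exact hc _ (fun hh' => hy ((hOinv h hh y).1 hh'))
  obtain ⟨x', hx'O, hx'⟩ := h1
  obtain ⟨y', hy'O, hy'⟩ := h2
  let F : Option (O × (Oᶜ : Set (Fin n))) → Perm (Fin n) ⧸ H := fun o =>
    match o with
    | none => QuotientGroup.mk 1
    | some p => QuotientGroup.mk (swap (p.1 : Fin n) (p.2 : Fin n))
  have key : ∀ g g' : Perm (Fin n), (QuotientGroup.mk g : Perm (Fin n) ⧸ H) = QuotientGroup.mk g' →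
      ∀ w, (g⁻¹ w ∈ O ↔ g'⁻¹ w ∈ O) := by
    intro g g' hgg w
    have := hOinv _ (QuotientGroup.eq.1 hgg) (g'⁻¹ w)
    simpa using this
  have hF : Function.Injective F := by
    rintro (_ | ⟨⟨a, ha⟩, ⟨b, hb⟩⟩) (_ | ⟨⟨c, hc⟩, ⟨d, hd⟩⟩) hab
    · rfl
    · exfalso
      have := key _ _ hab c
      simp at this
      exact hd (this.1 hc)
    · exfalso
      have := key _ _ hab a
      simp at this
      exact hb (this.2 ha)
    · have e1 := key _ _ hab a
      have e2 := key _ _ hab b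
      simp only [Set.mem_compl_iff] at hb hd
      simp only [swap_inv, swap_apply_left, swap_apply_right, swap_apply_def] at e1 e2
      have hac : a = c := by grind
      have hbd : b = d := by grind
      subst hac; subst hbd; rfl
  have hcard := Nat.card_le_card_of_injective F hF
  have hidx : Nat.card (Perm (Fin n) ⧸ H) = n := hH
  rw [hidx, Finite.card_option, Nat.card_prod, Nat.card_coe_set_eq, Nat.card_coe_set_eq] at hcard
  have hsum := Set.ncard_add_ncard_compl O
  rw [Nat.card_fin] at hsum
  have c1 : 2 ≤ O.ncard := by
    have : 1 < O.ncard := (Set.one_lt_ncard (Set.toFinite _)).2 ⟨x, hxO, x', hx'O, hx'.symm⟩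
    omega
  have c2 : 2 ≤ Oᶜ.ncard := by
    have : 1 < Oᶜ.ncard := (Set.one_lt_ncard (Set.toFinite _)).2 ⟨y, hy, y', hy'O, hy'.symm⟩
    omega
  nlinarith [Nat.mul_le_mul c1 c2, Nat.mul_le_mul_right (Oᶜ.ncard) c1]

lemma hyp_core_bot {n : ℕ} (hn : 5 ≤ n) (H : Subgroup (Perm (Fin n)))
    (hA : ¬ alternatingGroup (Fin n) ≤ H) : H.normalCore = ⊥ := by
  by_contra hc
  have : Nontrivial H.normalCore := (Subgroup.nontrivial_iff_ne_bot _).2 hc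
  exact hA ((Equiv.Perm.alternatingGroup_le_of_normal (by simpa using hn) this).trans
    H.normalCore_le)

lemma hyp_index_le_two {n : ℕ} (hn : 2 ≤ n) (H : Subgroup (Perm (Fin n)))
    (hA : alternatingGroup (Fin n) ≤ H) : H.index ≤ 2 := by
  have : Nontrivial (Fin n) := Fin.nontrivial_iff_two_le.2 hn
  have h := Subgroup.index_dvd_of_le hA
  rw [alternatingGroup.index_eq_two] at h
  exact Nat.le_of_dvd (by norm_num) h

/-- subgroups of index `< n` contain the alternating group. -/
lemma hyp_small_index {n : ℕ} (hn : 5 ≤ n) (H : Subgroup (Perm (Fin n)))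
    (hH : H.index < n) : alternatingGroup (Fin n) ≤ H := by
  by_contra hA
  have h1 := hyp_core_bot hn H hA
  rw [Subgroup.normalCore_eq_ker, MonoidHom.ker_eq_bot_iff] at h1
  have h2 := Nat.card_le_card_of_injective _ h1
  rw [Nat.card_perm, Nat.card_perm, Nat.card_fin] at h2
  have h3 : Nat.card (Perm (Fin n) ⧸ H) = H.index := rfl
  rw [h3] at h2
  have h4 : H.index ≠ 0 := Subgroup.index_ne_zero_of_finite
  exact absurd h2 (not_le.2 ((Nat.factorial_lt (Nat.pos_of_ne_zero h4)).2 hH))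

lemma hyp_auto {n : ℕ} (hn : 5 ≤ n) (H : Subgroup (Perm (Fin n))) (hH : H.index = n) :
    ∃ (α : Perm (Fin n) ≃* Perm (Fin n)) (i : Fin n), ∀ σ, σ ∈ H ↔ α σ i = i := by
  have hA : ¬ alternatingGroup (Fin n) ≤ H := fun h => by
    have := hyp_index_le_two (by omega) H h
    omega
  have h1 := hyp_core_bot hn H hA
  rw [Subgroup.normalCore_eq_ker, MonoidHom.ker_eq_bot_iff] at h1
  have hidx : Nat.card (Perm (Fin n) ⧸ H) = n := hH
  let e : (Perm (Fin n) ⧸ H) ≃ Fin n := Finite.equivFinOfCardEq hidx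
  let f : Perm (Fin n) →* Perm (Fin n) :=
    (e.permCongrHom.toMonoidHom).comp (MulAction.toPermHom (Perm (Fin n)) (Perm (Fin n) ⧸ H))
  have hf : Function.Injective f := e.permCongrHom.injective.comp h1
  refine ⟨MulEquiv.ofBijective f ⟨hf, Finite.surjective_of_injective hf⟩,
    e (QuotientGroup.mk 1), fun σ => ?_⟩
  have : f σ (e (QuotientGroup.mk 1)) = e (QuotientGroup.mk σ) := by
    simp [f]
  change _ ↔ f σ (e (QuotientGroup.mk 1)) = _
  rw [this, e.apply_eq_iff_eq, eq_comm, QuotientGroup.eq]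
  simp

lemma hyp_arith : ∀ j : ℕ, 2 ^ (j + 3) * (j + 4).factorial < (2 * j + 6).factorial := by
  intro j
  induction j with
  | zero => decide
  | succ j ih =>
    have e1 : (2 * (j + 1) + 6).factorial = (2 * j + 8) * ((2 * j + 7) * (2 * j + 6).factorial) := by
      rw [show 2 * (j + 1) + 6 = (2 * j + 6 + 1) + 1 by ring, Nat.factorial_succ, Nat.factorial_succ]
    have e2 : (j + 1 + 4).factorial = (j + 5) * (j + 4).factorial := by
      rw [show j + 1 + 4 = (j + 4) + 1 by ring, Nat.factorial_succ]
    rw [e1, e2]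
    calc 2 ^ (j + 1 + 3) * ((j + 5) * (j + 4).factorial)
        = (2 * (j + 5)) * (2 ^ (j + 3) * (j + 4).factorial) := by ring
      _ < (2 * (j + 5)) * (2 * j + 6).factorial := by
          apply Nat.mul_lt_mul_of_pos_left ih; omega
      _ ≤ ((2 * j + 8) * (2 * j + 7)) * (2 * j + 6).factorial := by
          apply Nat.mul_le_mul_right; nlinarith
      _ = _ := by ring

lemma hyp_arith2 {n k : ℕ} (hk : 1 ≤ k) (hkn : 2 * k ≤ n)
    (h : (n - 2 * k).factorial * 2 ^ k * k.factorial = (n - 2).factorial * 2) :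
    k = 1 ∨ (n = 6 ∧ k = 3) := by
  obtain ⟨m, rfl⟩ : ∃ m, n = 2 * k + m := ⟨n - 2 * k, by omega⟩
  obtain ⟨j, rfl⟩ : ∃ j, k = j + 1 := ⟨k - 1, by omega⟩
  rw [show 2 * (j + 1) + m - 2 * (j + 1) = m by omega,
    show 2 * (j + 1) + m - 2 = 2 * j + m by omega] at h
  have hc := Nat.choose_mul_factorial_mul_factorial (show 2 * j ≤ 2 * j + m by omega)
  rw [show 2 * j + m - 2 * j = m by omega] at hc
  rw [← hc] at h
  have hm := Nat.factorial_pos m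
  have h' : 2 ^ j * (j + 1).factorial = (2 * j + m).choose (2 * j) * (2 * j).factorial := by
    have : m.factorial * 2 * (2 ^ j * (j + 1).factorial) =
        m.factorial * 2 * ((2 * j + m).choose (2 * j) * (2 * j).factorial) := by
      rw [pow_succ] at h
      linarith
    exact Nat.eq_of_mul_eq_mul_left (by omega) this
  have hpos : 1 ≤ (2 * j + m).choose (2 * j) := Nat.choose_pos (by omega)
  match j with
  | 0 => left; rfl
  | 1 =>
    exfalso
    have h3 : (2 * 1 + m).choose (2 * 1) = 2 := by
      have : (2 * 1).factorial = 2 := rfl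
      have : (1 + 1).factorial = 2 := rfl
      simp_all
      omega
    rcases m with _ | _ | m
    · simp at h3
    · simp [Nat.choose] at h3
    · have h4 : Nat.choose 4 2 ≤ (2 * 1 + (m + 1 + 1)).choose (2 * 1) :=
        Nat.choose_le_choose 2 (by omega)
      have : Nat.choose 4 2 = 6 := by decide
      omega
  | 2 =>
    right
    have h3 : (2 * 2 + m).choose (2 * 2) = 1 := by
      have e1 : (2 * 2).factorial = 24 := rfl
      have e2 : (2 + 1).factorial = 6 := rfl
      rw [e1, e2] at h'
      omega
    rcases m with _ | m
    · simp
    · have h4 : Nat.choose 5 4 ≤ (2 * 2 + (m + 1)).choose (2 * 2) :=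
        Nat.choose_le_choose 4 (by omega)
      have : Nat.choose 5 4 = 5 := by decide
      omega
  | j + 3 =>
    exfalso
    have := hyp_arith j
    rw [show 2 * (j + 3) = 2 * j + 6 by ring, show j + 3 + 1 = j + 4 by ring] at h'
    nlinarith [Nat.mul_le_mul_right (2 * j + 6).factorial
      (show 1 ≤ (2 * j + 6 + m).choose (2 * j + 6) from Nat.choose_pos (by omega))]

lemma hyp_invol_type {n : ℕ} (g : Perm (Fin n)) (hg : orderOf g = 2) :
    ∃ k, 1 ≤ k ∧ 2 * k ≤ n ∧ g.cycleType = Multiset.replicate k 2 ∧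
      Nat.card (Subgroup.centralizer {g}) = (n - 2 * k).factorial * 2 ^ k * k.factorial := by
  obtain ⟨m, hm⟩ := Equiv.Perm.cycleType_prime_order (σ := g) (by rw [hg]; exact Nat.prime_two)
  rw [hg] at hm
  refine ⟨m + 1, by omega, ?_, hm, ?_⟩
  · have := g.sum_cycleType_le
    rw [hm] at this
    simp at this
    omega
  · rw [Equiv.Perm.nat_card_centralizer, hm]
    have : (Multiset.replicate (m + 1) 2).toFinset = {2} := by
      rw [Multiset.toFinset_replicate]; simp
    rw [this]
    simp only [Multiset.sum_replicate, Multiset.prod_replicate, Finset.prod_singleton,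
      Multiset.count_replicate_self, smul_eq_mul, Fintype.card_fin, mul_comm]

lemma hyp_card_centralizer {G : Type*} [Group G] (α : G ≃* G) (g : G) :
    Nat.card (Subgroup.centralizer {α g}) = Nat.card (Subgroup.centralizer {g}) := by
  refine (Nat.card_congr ?_).symm
  refine α.toEquiv.subtypeEquiv fun x => ?_
  rw [Subgroup.mem_centralizer_singleton_iff, Subgroup.mem_centralizer_singleton_iff]
  simp only [MulEquiv.toEquiv_eq_coe, EquivLike.coe_coe, ← map_mul, α.injective.eq_iff]

/-- image of a swap under an automorphism -/
lemma hyp_swap_image {n : ℕ} (α : Perm (Fin n) ≃* Perm (Fin n)) (g : Perm (Fin n))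
    (hg : g.IsSwap) :
    (α g).IsSwap ∨ (n = 6 ∧ (α g).cycleType = Multiset.replicate 3 2) := by
  have ho : orderOf g = 2 := hg.orderOf
  obtain ⟨k, hk1, hk2, hk3, hk4⟩ := hyp_invol_type (α g) (by rw [MulEquiv.orderOf_eq, ho])
  obtain ⟨l, hl1, hl2, hl3, hl4⟩ := hyp_invol_type g ho
  have hl : l = 1 := by
    have := (Equiv.Perm.card_support_eq_two.2 hg)
    rw [← g.sum_cycleType, hl3] at this
    simp at this
    omega
  subst hl
  rw [hyp_card_centralizer, hl4] at hk4
  rcases hyp_arith2 hk1 hk2 (by rw [← hk4]; simp) with rfl | ⟨h6, rfl⟩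
  · left
    rw [← Equiv.Perm.card_support_eq_two, ← Equiv.Perm.sum_cycleType, hk3]; simp
  · right; exact ⟨h6, hk3⟩

lemma hyp_isSwap_conj {n : ℕ} {s t : Perm (Fin n)} (h : IsConj s t) (hs : s.IsSwap) :
    t.IsSwap := by
  rw [← Equiv.Perm.card_support_eq_two, ← Equiv.Perm.sum_cycleType] at hs ⊢
  rw [← Equiv.Perm.isConj_iff_cycleType_eq.1 h, hs]

lemma hyp_symm_conj {G : Type*} [Group G] (α : G ≃* G) {s t : G} (h : IsConj s (α t)) :
    IsConj (α.symm s) t := by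
  have := α.symm.toMonoidHom.map_isConj h
  simpa using this

lemma hyp_isSwap_isConj {n : ℕ} {s t : Perm (Fin n)} (hs : s.IsSwap) (ht : t.IsSwap) :
    IsConj s t := by
  obtain ⟨a, b, hab, rfl⟩ := hs
  obtain ⟨c, d, hcd, rfl⟩ := ht
  exact Equiv.Perm.isConj_swap hab hcd

lemma hyp_stab_closure {n : ℕ} (i : Fin n) :
    MulAction.stabilizer (Perm (Fin n)) i =
      Subgroup.closure {s : Perm (Fin n) | s.IsSwap ∧ s i = i} := by
  apply le_antisymm
  · intro f hf
    rw [mem_closure_isSwap (fun f hf => hf.1)]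
    refine ⟨Set.toFinite _, fun x => ?_⟩
    have hfi : f i = i := hf
    by_cases hx : f x = x
    · rw [hx]; exact MulAction.mem_orbit_self x
    · have hxi : x ≠ i := by rintro rfl; exact hx hfi
      have hfxi : f x ≠ i := fun h => hxi (f.injective (h.trans hfi.symm))
      exact ⟨⟨swap x (f x), Subgroup.subset_closure
        ⟨⟨x, f x, fun h => hx h.symm, rfl⟩, swap_apply_of_ne_of_ne hxi.symm hfxi.symm⟩⟩,
        swap_apply_left _ _⟩
  · rw [Subgroup.closure_le]
    rintro s ⟨-, hs⟩
    exact hs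

lemma hyp_C {n : ℕ} (hn : 4 ≤ n) (α : Perm (Fin n) ≃* Perm (Fin n))
    (hα : ∀ s : Perm (Fin n), s.IsSwap → (α s).IsSwap) (i : Fin n) :
    ∃ x : Fin n, ∀ σ, α σ i = i ↔ σ x = x := by
  let H := (MulAction.stabilizer (Perm (Fin n)) i).comap (α : Perm (Fin n) →* Perm (Fin n))
  have hidx : H.index = n := by
    rw [Subgroup.index_comap_of_surjective _ α.surjective,
      MulAction.index_stabilizer_of_transitive]
    simp
  have hsymm : ∀ s : Perm (Fin n), s.IsSwap → (α.symm s).IsSwap := by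
    intro s hs
    exact hyp_isSwap_conj (hyp_symm_conj α (hyp_isSwap_isConj hs (hα s hs))).symm hs
  have hcl : H = Subgroup.closure
      ((α.symm : Perm (Fin n) →* Perm (Fin n)) '' {s : Perm (Fin n) | s.IsSwap ∧ s i = i}) := by
    rw [← MonoidHom.map_closure, ← hyp_stab_closure]
    ext σ
    simp only [H, Subgroup.mem_comap, Subgroup.mem_map]
    constructor
    · intro h
      exact ⟨α σ, h, by simp⟩
    · rintro ⟨τ, hτ, rfl⟩
      simpa using hτ
  have hT : ¬ MulAction.IsPretransitive H (Fin n) := by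
    intro hT
    rw [hcl] at hT
    have := closure_of_isSwap_of_isPretransitive (S :=
      ((α.symm : Perm (Fin n) →* Perm (Fin n)) '' {s : Perm (Fin n) | s.IsSwap ∧ s i = i}))
      (by rintro _ ⟨s, hs, rfl⟩; exact hsymm s hs.1)
    rw [← hcl] at this
    rw [this, Subgroup.index_top] at hidx
    omega
  obtain ⟨x, hx⟩ := hyp_intransitive hn H hidx hT
  refine ⟨x, fun σ => ?_⟩
  have : σ ∈ H ↔ σ ∈ MulAction.stabilizer (Perm (Fin n)) x := by rw [hx]
  exact this

lemma hyp_stab_inj {n : ℕ} (hn : 4 ≤ n) {i j : Fin n}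
    (h : ∀ σ : Perm (Fin n), σ i = i → σ j = j) : i = j := by
  by_contra hij
  obtain ⟨k, hk⟩ : ∃ k : Fin n, k ∉ ({i, j} : Finset (Fin n)) := by
    by_contra! hc
    have h1 : (Finset.univ : Finset (Fin n)) ⊆ {i, j} := fun a _ => hc a
    have h2 := Finset.card_le_card h1
    have h3 := Finset.card_le_two (a := i) (b := j)
    rw [Finset.card_fin] at h2
    omega
  simp only [Finset.mem_insert, Finset.mem_singleton, not_or] at hk
  have := h (swap j k) (swap_apply_of_ne_of_ne hij (Ne.symm hk.1))
  rw [swap_apply_left] at this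
  exact hk.2 this

lemma hyp_inner {n : ℕ} (hn : 4 ≤ n) (β : Perm (Fin n) ≃* Perm (Fin n))
    (hβ : ∀ s : Perm (Fin n), s.IsSwap → (β s).IsSwap) :
    ∃ f : Perm (Fin n), ∀ σ, β σ = f⁻¹ * σ * f := by
  choose x hx using hyp_C hn β hβ
  have hinj : Function.Injective x := by
    intro i j hij
    apply hyp_stab_inj hn
    intro σ hσ
    obtain ⟨τ, rfl⟩ := β.surjective σ
    rw [hx] at hσ ⊢
    rwa [← hij]
  let f : Perm (Fin n) := Equiv.ofBijective x ⟨hinj, Finite.surjective_of_injective hinj⟩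
  have hf : ∀ i, f i = x i := fun i => rfl
  refine ⟨f, fun σ => ?_⟩
  ext i
  rw [mul_assoc, Equiv.Perm.mul_apply, Equiv.Perm.mul_apply]
  congr 1
  rw [Equiv.Perm.eq_inv_iff_eq, hf, hf]
  apply hyp_stab_inj hn
  intro ρ hρ
  rw [← hx] at hρ
  have h1 : β (σ⁻¹ * ρ * σ) i = i := by
    simp [Equiv.Perm.mul_apply, hρ]
  rw [hx] at h1
  rw [Equiv.Perm.mul_apply, Equiv.Perm.mul_apply, Equiv.Perm.inv_eq_iff_eq] at h1
  exact h1

lemma hyp_type3 {n : ℕ} (hn : 5 ≤ n) (H : Subgroup (Perm (Fin n)))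
    (hne : ∀ x : Fin n, H ≠ MulAction.stabilizer (Perm (Fin n)) x)
    (α : Perm (Fin n) ≃* Perm (Fin n)) (i : Fin n) (hα : ∀ σ, σ ∈ H ↔ α σ i = i) :
    n = 6 ∧ ∀ s : Perm (Fin n), s.IsSwap → (α s).cycleType = Multiset.replicate 3 2 := by
  obtain ⟨t, ht, hnt⟩ : ∃ t : Perm (Fin n), t.IsSwap ∧ ¬ (α t).IsSwap := by
    by_contra! hc
    obtain ⟨x, hx⟩ := hyp_C (by omega) α hc i
    apply hne x
    ext σ
    rw [hα, hx]; rfl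
  obtain ⟨h6, h3⟩ := (hyp_swap_image α t ht).resolve_left hnt
  refine ⟨h6, fun s hs => ?_⟩
  have : IsConj (α s) (α t) := α.toMonoidHom.map_isConj (hyp_isSwap_isConj hs ht)
  rw [Equiv.Perm.isConj_iff_cycleType_eq.1 this, h3]

lemma hyp_E {n : ℕ} (hn : 5 ≤ n) (H₁ H₂ : Subgroup (Perm (Fin n)))
    (h₁ : H₁.index = n) (h₂ : H₂.index = n)
    (hne₁ : ∀ x : Fin n, H₁ ≠ MulAction.stabilizer (Perm (Fin n)) x)
    (hne₂ : ∀ x : Fin n, H₂ ≠ MulAction.stabilizer (Perm (Fin n)) x) :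
    ∃ f : Perm (Fin n), ∀ σ, σ ∈ H₁ ↔ f⁻¹ * σ * f ∈ H₂ := by
  obtain ⟨α₁, i₁, hα₁⟩ := hyp_auto hn H₁ h₁
  obtain ⟨α₂, i₂, hα₂⟩ := hyp_auto hn H₂ h₂
  have t₁ := (hyp_type3 hn H₁ hne₁ α₁ i₁ hα₁).2
  have t₂ := (hyp_type3 hn H₂ hne₂ α₂ i₂ hα₂).2
  obtain ⟨f, hf⟩ := hyp_inner (by omega) (α₁.trans α₂.symm) (fun s hs => by
    refine hyp_isSwap_conj (hyp_symm_conj α₂ (t := s) ?_).symm hs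
    rw [Equiv.Perm.isConj_iff_cycleType_eq, t₂ s hs]
    exact t₁ s hs)
  obtain ⟨τ, hτ⟩ := α₂.surjective (swap i₁ i₂)
  have hτ2 : α₂ τ i₂ = i₁ := by rw [hτ, swap_apply_right]
  refine ⟨f * τ, fun σ => ?_⟩
  have e1 : α₁ σ = α₂ (f⁻¹ * σ * f) := by
    rw [← hf]; simp
  rw [hα₁, hα₂, e1]
  have e2 : (f * τ)⁻¹ * σ * (f * τ) = τ⁻¹ * (f⁻¹ * σ * f) * τ := by group
  rw [e2, map_mul α₂ _ τ, map_mul α₂ τ⁻¹, map_inv, Equiv.Perm.mul_apply, Equiv.Perm.mul_apply,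
    Equiv.Perm.inv_eq_iff_eq, hτ2]

lemma hyp_card_proj : Nat.card ProjLine5 = 6 := by
  rw [Projectivization.card_of_finrank_two]
  · simp
  · simp

lemma hyp_glPerm_mk (g : GL (Fin 2) (ZMod 5)) (v : Fin 2 → ZMod 5) (hv : v ≠ 0)
    (hv' : (g : Matrix (Fin 2) (Fin 2) (ZMod 5)).mulVec v ≠ 0) :
    glPermHom g (Projectivization.mk (ZMod 5) v hv) =
      Projectivization.mk (ZMod 5) ((g : Matrix (Fin 2) (Fin 2) (ZMod 5)).mulVec v) hv' := by
  rfl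

lemma hyp_mulVec_ne (g : GL (Fin 2) (ZMod 5)) (v : Fin 2 → ZMod 5) (hv : v ≠ 0) :
    (g : Matrix (Fin 2) (Fin 2) (ZMod 5)).mulVec v ≠ 0 := by
  intro h
  apply hv
  have := congrArg ((g⁻¹ : GL (Fin 2) (ZMod 5)) : Matrix (Fin 2) (Fin 2) (ZMod 5)).mulVec h
  rw [Matrix.mulVec_mulVec, ← Units.val_mul, inv_mul_cancel] at this
  simpa using this

lemma hyp_ker_smul (g : GL (Fin 2) (ZMod 5)) (v : Fin 2 → ZMod 5) (hv : v ≠ 0)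
    (h : glPermHom g (Projectivization.mk (ZMod 5) v hv) = Projectivization.mk (ZMod 5) v hv) :
    ∃ a : ZMod 5, ∀ i, a * v i = (g : Matrix (Fin 2) (Fin 2) (ZMod 5)) i 0 * v 0 +
      (g : Matrix (Fin 2) (Fin 2) (ZMod 5)) i 1 * v 1 := by
  rw [hyp_glPerm_mk g v hv (hyp_mulVec_ne g v hv), Projectivization.mk_eq_mk_iff'] at h
  obtain ⟨a, ha⟩ := h
  refine ⟨a, fun i => ?_⟩
  have := congrFun ha i
  rw [Matrix.mulVec_eq_sum] at this
  simpa [Fin.sum_univ_two, mul_comm] using this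

lemma hyp_ker : glPermHom.ker = (Matrix.GeneralLinearGroup.scalar (Fin 2) :
    (ZMod 5)ˣ →* GL (Fin 2) (ZMod 5)).range := by
  ext g
  rw [MonoidHom.mem_ker, MonoidHom.mem_range]
  constructor
  · intro hg
    have hfix : ∀ p, glPermHom g p = p := fun p => by rw [hg]; rfl
    obtain ⟨a, ha⟩ := hyp_ker_smul g ![1, 0] (by decide) (hfix _)
    obtain ⟨b, hb⟩ := hyp_ker_smul g ![0, 1] (by decide) (hfix _)
    obtain ⟨c, hc⟩ := hyp_ker_smul g ![1, 1] (by decide) (hfix _)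
    have a0 := ha 0; have a1 := ha 1; have b0 := hb 0; have b1 := hb 1
    have c0 := hc 0; have c1 := hc 1
    simp at a0 a1 b0 b1 c0 c1
    have hne : a ≠ 0 := by
      rintro rfl
      have := g.det.ne_zero
      apply this
      change Matrix.det (g : Matrix (Fin 2) (Fin 2) (ZMod 5)) = 0
      rw [Matrix.det_fin_two, ← a0, ← a1]
      ring
    refine ⟨Units.mk0 a hne, ?_⟩
    ext i j
    fin_cases i <;> fin_cases j <;>
      simp [Matrix.GeneralLinearGroup.scalar] <;> grind
  · rintro ⟨u, rfl⟩
    ext p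
    induction p using Projectivization.ind with
    | h v hv =>
    rw [hyp_glPerm_mk _ v hv (hyp_mulVec_ne _ v hv)]
    change _ = Projectivization.mk (ZMod 5) v hv
    rw [Projectivization.mk_eq_mk_iff']
    refine ⟨u, ?_⟩
    simp [Matrix.GeneralLinearGroup.scalar]

lemma hyp_card_range : Nat.card glPermHom.range = 120 := by
  have h1 := glPermHom.ker.card_mul_index
  rw [Subgroup.index_ker, hyp_ker] at h1
  have h2 : Nat.card (Matrix.GeneralLinearGroup.scalar (Fin 2) :
    (ZMod 5)ˣ →* GL (Fin 2) (ZMod 5)).range = 4 := by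
    rw [← Nat.card_congr (MonoidHom.ofInjective (f := (Matrix.GeneralLinearGroup.scalar (Fin 2) :
      (ZMod 5)ˣ →* GL (Fin 2) (ZMod 5))) ?_).toEquiv]
    · rw [Nat.card_eq_fintype_card, ZMod.card_units]
    · intro u v huv
      have := congrArg (fun g : GL (Fin 2) (ZMod 5) =>
        (g : Matrix (Fin 2) (Fin 2) (ZMod 5)) 0 0) huv
      ext
      simpa [Matrix.GeneralLinearGroup.scalar] using this
  have h3 : Nat.card (GL (Fin 2) (ZMod 5)) = 480 := by
    rw [Matrix.card_GL_field]
    simp [Fin.prod_univ_two]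
  rw [h2, h3] at h1
  omega

lemma hyp_permCongrHom_inj {α β : Type*} (f : α ≃ β) :
    Function.Injective (_root_.permCongrHom f) := by
  intro σ τ h
  ext x
  have := congrArg (fun g : Perm β => g (f x)) h
  simpa [_root_.permCongrHom] using this

lemma hyp_pgl_index (f : Fin 6 ≃ ProjLine5) : (pglSubgroup f).index = 6 := by
  have h1 : Nat.card (pglSubgroup f) = 120 := by
    rw [pglSubgroup, Subgroup.card_map_of_injective (hyp_permCongrHom_inj _), hyp_card_range]
  have h2 := (pglSubgroup f).card_mul_index
  rw [h1, Nat.card_perm, Nat.card_fin] at h2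
  have : (6).factorial = 720 := rfl
  omega

lemma hyp_mem_pgl {n : ℕ} (f : Fin n ≃ ProjLine5) (σ : Perm (Fin n)) :
    σ ∈ pglSubgroup f ↔ _root_.permCongrHom f σ ∈ glPermHom.range := by
  rw [pglSubgroup, Subgroup.mem_map]
  constructor
  · rintro ⟨g, hg, rfl⟩
    convert hg
    ext x
    simp [_root_.permCongrHom]
  · intro h
    refine ⟨_, h, ?_⟩
    ext x
    simp [_root_.permCongrHom]

lemma hyp_pgl_fix (f : Fin 6 ≃ ProjLine5) (x : Fin 6) :
    pglSubgroup f ≠ MulAction.stabilizer (Perm (Fin 6)) x := by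
  intro h
  have hfix : ∀ g, glPermHom g (f x) = f x := by
    intro g
    have : _root_.permCongrHom f.symm (glPermHom g) ∈ pglSubgroup f :=
      Subgroup.mem_map_of_mem _ ⟨g, rfl⟩
    rw [h] at this
    have h2 : f.symm (glPermHom g (f x)) = x := this
    rwa [Equiv.symm_apply_eq] at h2
  generalize f x = p at hfix
  induction p using Projectivization.ind with
  | h v hv =>
  obtain ⟨a, ha⟩ := hyp_ker_smul (Matrix.GeneralLinearGroup.mkOfDetNeZero !![1, 1; 0, 1]
    (by simp [Matrix.det_fin_two])) v hv (hfix _)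
  obtain ⟨b, hb⟩ := hyp_ker_smul (Matrix.GeneralLinearGroup.mkOfDetNeZero !![1, 0; 1, 1]
    (by simp [Matrix.det_fin_two])) v hv (hfix _)
  have a0 := ha 0; have a1 := ha 1; have b0 := hb 0; have b1 := hb 1
  simp [Matrix.GeneralLinearGroup.mkOfDetNeZero] at a0 a1 b0 b1
  apply hv
  have h1 : v 1 = 0 := by
    exact (by decide : ∀ a x y : ZMod 5, a * x = x + y → a * y = y → y = 0) a _ _ a0 a1
  have h0 : v 0 = 0 := by
    exact (by decide : ∀ a x y : ZMod 5, a * y = x + y → a * x = x → x = 0) b _ _ b1 b0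
  ext i
  fin_cases i
  · simpa using h0
  · simpa using h1

/-- Classification of index `n` subgroups of `S_n`. -/
lemma hyp_sym {n : ℕ} (hn : 4 ≤ n) (H : Subgroup (Perm (Fin n))) (hH : H.index = n) :
    (∃ x : Fin n, H = MulAction.stabilizer (Perm (Fin n)) x) ∨
    (n = 6 ∧ ∃ f : Fin n ≃ ProjLine5, H = pglSubgroup f) := by
  by_cases hst : ∃ x : Fin n, H = MulAction.stabilizer (Perm (Fin n)) x
  · exact Or.inl hst
  right
  rcases Nat.lt_or_ge n 5 with h5 | h5
  · obtain rfl : n = 4 := by omega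
    exfalso
    apply hst
    apply hyp_intransitive hn H hH
    intro hT
    have h1 := (MulAction.stabilizer H (0 : Fin 4)).card_mul_index
    have h2 := H.card_mul_index
    rw [MulAction.index_stabilizer_of_transitive, Nat.card_fin] at h1
    rw [hH, Nat.card_perm, Nat.card_fin] at h2
    have : (4).factorial = 24 := rfl
    omega
  · push Not at hst
    obtain ⟨α, i, hα⟩ := hyp_auto h5 H hH
    obtain ⟨rfl, -⟩ := hyp_type3 h5 H hst α i hα
    refine ⟨rfl, ?_⟩
    let f₀ : Fin 6 ≃ ProjLine5 := (Finite.equivFinOfCardEq hyp_card_proj).symm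
    obtain ⟨g, hg⟩ := hyp_E h5 H (pglSubgroup f₀) hH (hyp_pgl_index f₀) hst (hyp_pgl_fix f₀)
    refine ⟨(g⁻¹ : Perm (Fin 6)).trans f₀, ?_⟩
    ext σ
    rw [hg, hyp_mem_pgl, hyp_mem_pgl]
    rfl

lemma hyp_prodHom_apply {n : ℕ} (v : Fin n → ℤˣ) : prodHom n v = ∏ i, v i := by
  simp [prodHom]

lemma hyp_permAction_apply {n : ℕ} (σ : Perm (Fin n)) (v : Fin n → ℤˣ) (i : Fin n) :
    permAction n σ v i = v (σ⁻¹ i) := rfl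

lemma hyp_permAction_single {n : ℕ} (σ : Perm (Fin n)) (i : Fin n) (u : ℤˣ) :
    permAction n σ (Pi.mulSingle i u) = Pi.mulSingle (σ i) u := by
  ext j
  rw [hyp_permAction_apply, Pi.mulSingle_apply, Pi.mulSingle_apply]
  simp only [Equiv.Perm.inv_eq_iff_eq]

lemma hyp_two_trans {n : ℕ} (hn : 4 ≤ n) {i k a b : Fin n} (hik : i ≠ k) (hab : a ≠ b) :
    ∃ σ ∈ alternatingGroup (Fin n), σ i = a ∧ σ k = b := by
  let σ : Perm (Fin n) := swap (swap i a k) b * swap i a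
  have h1 : σ i = a := by
    simp only [σ, Equiv.Perm.mul_apply, swap_apply_left]
    apply swap_apply_of_ne_of_ne _ hab
    intro h
    have := congrArg (swap i a) h
    simp at this
    exact hik this
  have h2 : σ k = b := by
    simp only [σ, Equiv.Perm.mul_apply, swap_apply_left]
  rcases Int.units_eq_one_or (Equiv.Perm.sign σ) with hs | hs
  · exact ⟨σ, Equiv.Perm.mem_alternatingGroup.2 hs, h1, h2⟩
  · have hc : 1 < (({a, b} : Finset (Fin n))ᶜ).card := by
      rw [Finset.card_compl, Finset.card_pair hab, Fintype.card_fin]; omega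
    obtain ⟨c, hc, d, hd, hcd⟩ := Finset.one_lt_card.1 hc
    simp only [Finset.mem_compl, Finset.mem_insert, Finset.mem_singleton, not_or] at hc hd
    refine ⟨swap c d * σ, ?_, ?_, ?_⟩
    · rw [Equiv.Perm.mem_alternatingGroup, map_mul, hs, Equiv.Perm.sign_swap hcd]; rfl
    · rw [Equiv.Perm.mul_apply, h1, swap_apply_of_ne_of_ne (Ne.symm hc.1) (Ne.symm hd.1)]
    · rw [Equiv.Perm.mul_apply, h2, swap_apply_of_ne_of_ne (Ne.symm hc.2) (Ne.symm hd.2)]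

lemma hyp_units_eq {a b c : ℤˣ} (h1 : a ≠ b) (h2 : a ≠ c) : b = c := by
  rcases Int.units_eq_one_or a with rfl | rfl <;> rcases Int.units_eq_one_or b with rfl | rfl <;>
  rcases Int.units_eq_one_or c with rfl | rfl <;> simp_all

lemma hyp_units_mul {a b : ℤˣ} (h1 : a ≠ b) : a * b = -1 := by
  rcases Int.units_eq_one_or a with rfl | rfl <;> rcases Int.units_eq_one_or b with rfl | rfl <;>
  simp_all

lemma hyp_pair_mem {n : ℕ} (W : Subgroup (Fin n → ℤˣ))
    (hW : ∀ σ ∈ alternatingGroup (Fin n), ∀ v ∈ W, permAction n σ v ∈ W)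
    (v : Fin n → ℤˣ) (hv : v ∈ W) (i j k : Fin n) (hij : v i ≠ v j) (hjk : v k = v j)
    (hne : j ≠ k) :
    Pi.mulSingle i (-1) * Pi.mulSingle k (-1) ∈ W := by
  have hij' : i ≠ j := fun h => hij (by rw [h])
  have hik' : i ≠ k := fun h => hij (by rw [h, hjk])
  have h1 := mul_mem hv (hW (swap i j * swap j k)⁻¹ (by
    rw [inv_mem_iff, Equiv.Perm.mem_alternatingGroup, map_mul, Equiv.Perm.sign_swap hij',
      Equiv.Perm.sign_swap hne]; rfl) v hv)
  convert h1 using 1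
  ext x : 1
  rw [Pi.mul_apply, Pi.mul_apply, hyp_permAction_apply, inv_inv, Equiv.Perm.mul_apply]
  by_cases hxi : x = i
  · subst hxi
    rw [swap_apply_of_ne_of_ne hij' hik', swap_apply_left, hyp_units_mul hij,
      Pi.mulSingle_eq_same, Pi.mulSingle_eq_of_ne hik', mul_one]
  by_cases hxk : x = k
  · subst hxk
    rw [swap_apply_right, swap_apply_right, Pi.mulSingle_eq_same, Pi.mulSingle_eq_of_ne hxi,
      one_mul]
    exact (hyp_units_mul (by rw [hjk]; exact hij.symm)).symm
  rw [Pi.mulSingle_eq_of_ne hxi, Pi.mulSingle_eq_of_ne hxk]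
  by_cases hxj : x = j
  · subst hxj
    rw [swap_apply_left, swap_apply_of_ne_of_ne hik'.symm (Ne.symm hne), hjk, one_mul]
    exact (Int.units_mul_self _).symm
  · rw [swap_apply_of_ne_of_ne hxj hxk, swap_apply_of_ne_of_ne hxi hxj, one_mul]
    exact (Int.units_mul_self _).symm

lemma hyp_W {n : ℕ} (hn : 4 ≤ n) (W : Subgroup (Fin n → ℤˣ))
    (hW : ∀ σ ∈ alternatingGroup (Fin n), ∀ v ∈ W, permAction n σ v ∈ W)
    (hidx : W.index ≤ n) (htop : W ≠ ⊤) : W = evenSign n := by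
  obtain ⟨v, hv, i, j, hij⟩ : ∃ v ∈ W, ∃ i j, v i ≠ v j := by
    by_contra! hc
    let i0 : Fin n := ⟨0, by omega⟩
    have hinj : Function.Injective (fun w : W => (w : Fin n → ℤˣ) i0) := by
      intro w w' h
      ext i : 2
      rw [hc w w.2 i i0, hc w' w'.2 i i0]
      exact h
    have h1 := Nat.card_le_card_of_injective _ hinj
    have h2 := W.card_mul_index
    have h3 : Nat.card ℤˣ = 2 := by rw [Nat.card_eq_fintype_card]; rfl
    rw [Nat.card_fun, h3, Nat.card_fin] at h2
    rw [h3] at h1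
    have h4 : ∀ m, 4 ≤ m → 2 * m < 2 ^ m := by
      intro m hm
      induction m, hm using Nat.le_induction with
      | base => norm_num
      | succ m hm ih => rw [pow_succ]; omega
    have := h4 n hn
    nlinarith [Nat.mul_le_mul h1 hidx]
  have hpair : ∃ a b : Fin n, a ≠ b ∧
      (Pi.mulSingle a (-1) * Pi.mulSingle b (-1) : Fin n → ℤˣ) ∈ W := by
    obtain ⟨k, hk⟩ : ∃ k : Fin n, k ∉ ({i, j} : Finset (Fin n)) := by
      by_contra! hc
      have h1 : (Finset.univ : Finset (Fin n)) ⊆ {i, j} := fun a _ => hc a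
      have h2 := Finset.card_le_card h1
      have h3 := Finset.card_le_two (a := i) (b := j)
      rw [Finset.card_fin] at h2
      omega
    simp only [Finset.mem_insert, Finset.mem_singleton, not_or] at hk
    by_cases hkj : v k = v j
    · exact ⟨i, k, Ne.symm hk.1, hyp_pair_mem W hW v hv i j k hij hkj (Ne.symm hk.2)⟩
    · have hki : v k = v i := hyp_units_eq (fun h => hkj h.symm) (Ne.symm hij)
      exact ⟨j, k, Ne.symm hk.2, hyp_pair_mem W hW v hv j i k hij.symm hki (Ne.symm hk.1)⟩
  obtain ⟨a, b, hab, hmem⟩ := hpair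
  have hall : ∀ (c d : Fin n) (u : ℤˣ),
      (Pi.mulSingle c u * Pi.mulSingle d u : Fin n → ℤˣ) ∈ W := by
    intro c d u
    rcases Int.units_eq_one_or u with rfl | rfl
    · simp
    by_cases hcd : c = d
    · subst hcd
      rw [← Pi.mulSingle_mul, Int.units_mul_self]; simp
    · obtain ⟨σ, hσ, h1, h2⟩ := hyp_two_trans hn hab hcd
      have := hW σ hσ _ hmem
      rwa [map_mul, hyp_permAction_single, hyp_permAction_single, h1, h2] at this
  have hred : ∀ w : Fin n → ℤˣ, w * Pi.mulSingle a (prodHom n w) ∈ W := by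
    intro w
    have h1 : w * Pi.mulSingle a (prodHom n w) =
        ∏ i, (Pi.mulSingle i (w i) * Pi.mulSingle a (w i) : Fin n → ℤˣ) := by
      rw [Finset.prod_mul_distrib, Finset.univ_prod_mulSingle, hyp_prodHom_apply]
      congr 1
      exact map_prod (MonoidHom.mulSingle (fun _ : Fin n => ℤˣ) a) w Finset.univ
    rw [h1]
    exact prod_mem fun i _ => hall i a (w i)
  ext w
  rw [evenSign, MonoidHom.mem_ker]
  constructor
  · intro hw
    by_contra hne
    apply htop
    have hw1 : prodHom n w = -1 := (Int.units_eq_one_or _).resolve_left hne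
    have h2 := hred w
    rw [hw1, mul_mem_cancel_left hw] at h2
    rw [Subgroup.eq_top_iff']
    intro x
    have h3 := hred x
    rcases Int.units_eq_one_or (prodHom n x) with h | h
    · rw [h] at h3; simpa using h3
    · rw [h] at h3
      exact (mul_mem_cancel_right h2).1 h3
  · intro h
    have := hred w
    rw [h] at this
    simpa using this

lemma hyp_eq_mix {n : ℕ} (K : Subgroup (HyperOct n)) (V : Subgroup (Fin n → ℤˣ))
    (P : Subgroup (Perm (Fin n))) (h1 : ∀ v ∈ V, (inl v : HyperOct n) ∈ K)
    (h2 : ∀ σ ∈ P, (inr σ : HyperOct n) ∈ K)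
    (h3 : ∀ k ∈ K, k.left ∈ V ∧ k.right ∈ P) : K = mix V P := by
  apply le_antisymm
  · intro k hk
    rw [← inl_left_mul_inr_right k]
    exact mul_mem (Subgroup.mem_sup_left (Subgroup.mem_map_of_mem _ (h3 k hk).1))
      (Subgroup.mem_sup_right (Subgroup.mem_map_of_mem _ (h3 k hk).2))
  · rw [mix, sup_le_iff]
    constructor
    · rintro _ ⟨v, hv, rfl⟩; exact h1 v hv
    · rintro _ ⟨v, hv, rfl⟩; exact h2 v hv

lemma hyp_index_mul {n : ℕ} (K : Subgroup (HyperOct n)) :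
    (K.map (rightHom : HyperOct n →* Perm (Fin n))).index *
      (K.comap (inl : (Fin n → ℤˣ) →* HyperOct n)).index = K.index := by
  set P := K.map (rightHom : HyperOct n →* Perm (Fin n)) with hP
  set W := K.comap (inl : (Fin n → ℤˣ) →* HyperOct n) with hW
  have hfin : Finite (HyperOct n) := Finite.of_equiv _ SemidirectProduct.equivProd.symm
  have h1 : Nat.card K = Nat.card W * Nat.card P := by
    have e1 := Subgroup.relIndex_ker K (rightHom : HyperOct n →* Perm (Fin n))
    have e2 : W.map (inl : (Fin n → ℤˣ) →* HyperOct n) =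
        (rightHom : HyperOct n →* Perm (Fin n)).ker ⊓ K := by
      rw [hW, Subgroup.map_comap_eq, range_inl_eq_ker_rightHom]
    have e3 : Nat.card (W.map (inl : (Fin n → ℤˣ) →* HyperOct n)) = Nat.card W :=
      (Nat.card_congr (W.equivMapOfInjective (inl : (Fin n → ℤˣ) →* HyperOct n)
        inl_injective).toEquiv).symm
    rw [← Subgroup.inf_relIndex_right] at e1
    have e4 := Subgroup.relIndex_mul_relIndex ⊥ _ K bot_le
      (inf_le_right : (rightHom : HyperOct n →* Perm (Fin n)).ker ⊓ K ≤ K)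
    rw [Subgroup.relIndex_bot_left, Subgroup.relIndex_bot_left] at e4
    rw [e1, ← e2, e3] at e4
    exact e4.symm
  have hB : Nat.card (HyperOct n) = Nat.card (Fin n → ℤˣ) * Nat.card (Perm (Fin n)) :=
    SemidirectProduct.card
  have a1 := K.card_mul_index
  have a2 := W.card_mul_index
  have a3 := P.card_mul_index
  rw [hB, ← a2, ← a3, h1] at a1
  have b1 : 0 < Nat.card W * Nat.card P := Nat.mul_pos Nat.card_pos Nat.card_pos
  apply Nat.eq_of_mul_eq_mul_left b1
  rw [a1]
  ring

/-- the character `(v, σ) ↦ ∏ v i`. -/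
def hypChar (n : ℕ) : HyperOct n →* ℤˣ where
  toFun x := prodHom n x.left
  map_one' := by simp
  map_mul' x y := by
    rw [mul_left, map_mul]
    congr 1
    rw [hyp_prodHom_apply, hyp_prodHom_apply]
    exact Equiv.prod_comp (x.right⁻¹) y.left

lemma hyp_four {n : ℕ} (K : Subgroup (HyperOct n))
    (hW : K.comap (inl : (Fin n → ℤˣ) →* HyperOct n) = evenSign n)
    (hP : K.map (rightHom : HyperOct n →* Perm (Fin n)) = alternatingGroup (Fin n)) :
    K = mix (evenSign n) (alternatingGroup (Fin n)) := by
  have hin : ∀ v, (inl v : HyperOct n) ∈ K ↔ prodHom n v = 1 := by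
    intro v
    have : v ∈ K.comap (inl : (Fin n → ℤˣ) →* HyperOct n) ↔ v ∈ evenSign n := by rw [hW]
    exact this
  have hker : ∀ k ∈ K, k.right = 1 → hypChar n k = 1 := by
    intro k hk hr
    have : k = inl k.left := by ext <;> simp [hr]
    rw [this] at hk
    exact (hin _).1 hk
  have hT : alternatingGroup (Fin n) ≤
      (K ⊓ (hypChar n).ker).map (rightHom : HyperOct n →* Perm (Fin n)) := by
    rw [← Equiv.Perm.closure_three_cycles_eq_alternating, Subgroup.closure_le]
    intro σ hσ
    have hσ' : σ.IsThreeCycle := hσ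
    have : σ ∈ K.map (rightHom : HyperOct n →* Perm (Fin n)) := by
      rw [hP]; exact hσ'.mem_alternatingGroup
    obtain ⟨k, hk, rfl⟩ := this
    refine ⟨k, ⟨hk, ?_⟩, rfl⟩
    have h3 : hypChar n (k ^ 3) = 1 := by
      apply hker _ (pow_mem hk 3)
      have : (k ^ 3).right = (rightHom k) ^ 3 := by rw [← map_pow]; rfl
      rw [this, ← hσ'.orderOf, pow_orderOf_eq_one]
    rw [map_pow, pow_succ, Int.units_sq, one_mul] at h3
    exact h3
  have hchar : ∀ k ∈ K, hypChar n k = 1 := by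
    intro k hk
    have : rightHom k ∈ alternatingGroup (Fin n) := by
      rw [← hP]; exact Subgroup.mem_map_of_mem _ hk
    obtain ⟨l, ⟨hl, hl'⟩, hlk⟩ := hT this
    have h1 := hker (k * l⁻¹) (mul_mem hk (inv_mem hl)) (by
      change rightHom (k * l⁻¹) = 1
      rw [map_mul, map_inv, hlk, mul_inv_cancel])
    have hlone : hypChar n l = 1 := hl'
    rw [map_mul, map_inv, hlone, inv_one, mul_one] at h1
    exact h1
  apply hyp_eq_mix
  · intro v hv
    exact (hin v).2 hv
  · intro σ hσ
    rw [← hP] at hσ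
    obtain ⟨k, hk, rfl⟩ := hσ
    replace hk : k ∈ K := hk
    have h1 : (inl k.left : HyperOct n) ∈ K := (hin _).2 (hchar k hk)
    have h2 := inl_left_mul_inr_right k
    rw [← h2, mul_mem_cancel_left h1] at hk
    exact hk
  · intro k hk
    refine ⟨hchar k hk, ?_⟩
    rw [← hP]; exact Subgroup.mem_map_of_mem _ hk

lemma hyp_inv {n : ℕ} (K : Subgroup (HyperOct n)) (σ : Perm (Fin n))
    (hσ : σ ∈ K.map (rightHom : HyperOct n →* Perm (Fin n))) (v : Fin n → ℤˣ)
    (hv : v ∈ K.comap (inl : (Fin n → ℤˣ) →* HyperOct n)) :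
    permAction n σ v ∈ K.comap (inl : (Fin n → ℤˣ) →* HyperOct n) := by
  obtain ⟨k, hk, rfl⟩ := hσ
  have h1 : k * inl v * k⁻¹ ∈ K := mul_mem (mul_mem hk hv) (inv_mem hk)
  have h2 : k * inl v * k⁻¹ = inl (permAction n (rightHom k) v) := by
    rw [mul_inv_eq_iff_eq_mul]
    ext : 1
    · simp [mul_comm]
    · simp
  rw [h2] at h1
  exact h1

/-- For `n ≥ 4`, a subgroup of the hyperoctahedral group `Bₙ` of index `n` is, up to
conjugacy, `C₂ⁿ ⋊ Sₙ₋₁` (stabilizer of the last coordinate axis in the permutation part),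
or `n = 4` and it is `C₂⁴⁺ ⋊ A₄`, or `n = 6` and it is `C₂⁶ ⋊ PGL₂(5)`. -/
theorem subgroup_of_index_n_in_hyperoctahedral (n : ℕ) (hn : 4 ≤ n)
    (K : Subgroup (HyperOct n)) (hK : K.index = n) :
    (∃ x : Fin n, K = mix ⊤ (MulAction.stabilizer (Equiv.Perm (Fin n)) x)) ∨
      (n = 4 ∧ K = mix (evenSign n) (alternatingGroup (Fin n))) ∨
      (n = 6 ∧ ∃ f : Fin n ≃ ProjLine5, K = mix ⊤ (pglSubgroup f)) := by
  have hmul := hyp_index_mul K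
  rw [hK] at hmul
  have hinv := hyp_inv K
  generalize hP : K.map (rightHom : HyperOct n →* Perm (Fin n)) = P at *
  generalize hW : K.comap (inl : (Fin n → ℤˣ) →* HyperOct n) = W at *
  by_cases htop : W = ⊤
  · subst htop
    rw [Subgroup.index_top, mul_one] at hmul
    have hin : ∀ v, (inl v : HyperOct n) ∈ K := by
      intro v
      have : v ∈ K.comap (inl : (Fin n → ℤˣ) →* HyperOct n) := by rw [hW]; trivial
      exact this
    have hKm : K = mix ⊤ P := by
      apply hyp_eq_mix
      · intro v _; exact hin v
      · intro σ hσ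
        rw [← hP] at hσ
        obtain ⟨k, hk, rfl⟩ := hσ
        replace hk : k ∈ K := hk
        have h2 := inl_left_mul_inr_right k
        rw [← h2, mul_mem_cancel_left (hin _)] at hk
        exact hk
      · intro k hk
        refine ⟨trivial, ?_⟩
        rw [← hP]; exact Subgroup.mem_map_of_mem _ hk
    rcases hyp_sym hn P hmul with ⟨x, hx⟩ | ⟨h6, f, hf⟩
    · exact Or.inl ⟨x, by rw [hKm, hx]⟩
    · exact Or.inr (Or.inr ⟨h6, f, by rw [hKm, hf]⟩)
  · right; left
    have hW0 : W.index ≠ 0 := Subgroup.index_ne_zero_of_finite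
    have hP0 : P.index ≠ 0 := Subgroup.index_ne_zero_of_finite
    have hW1 : W.index ≠ 1 := fun h => htop (Subgroup.index_eq_one.1 h)
    have hW2 : 2 ≤ W.index := by omega
    have hPW : P.index * 2 ≤ n := (Nat.mul_le_mul_left _ hW2).trans hmul.le
    have hA : alternatingGroup (Fin n) ≤ P := by
      rcases Nat.lt_or_ge n 5 with h5 | h5
      · apply Equiv.Perm.alternatingGroup_le_of_index_le_two
        omega
      · exact hyp_small_index h5 P (by omega)
    have hP2 := hyp_index_le_two (by omega) P hA
    have hWn : W.index ≤ n := 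
      (Nat.le_mul_of_pos_left _ (Nat.pos_of_ne_zero hP0)).trans hmul.le
    have hWe := hyp_W hn W (fun σ hσ v hv => hinv σ (hA hσ) v hv) hWn htop
    have hWle : W.index ≤ 2 := by
      rw [hWe, evenSign, Subgroup.index_ker]
      have h3 : Nat.card ℤˣ = 2 := by rw [Nat.card_eq_fintype_card]; rfl
      rw [← h3]
      exact Subgroup.card_le_card_group _
    have hWeq : W.index = 2 := by omega
    rw [hWeq] at hmul
    have hn4 : n = 4 := by omega
    have hPi : P.index = 2 := by omega
    refine ⟨hn4, hyp_four K (hW.trans hWe) (hP.trans ?_)⟩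
    exact Equiv.Perm.eq_alternatingGroup_of_index_eq_two hPi
end

section
/- If Λ ⊆ ℤ⁶ is a rank-6 lattice invariant under C₂⁶ ⋊ PGL₂(5), where PGL₂(5) ≤ S₆ acts on the 6 coordinates as on the projective line over GF(5), then Λ = s·ℤ⁶, s·D₆, or s·{x ∈ ℤ⁶ : all xᵢ of equal parity} for some positive integer s. -/
open Equiv Projectivization

/-- The signed permutation of `ℤⁿ` determined by a sign vector `v` and a permutation `σ`:
`x ↦ (i ↦ v i * x (σ⁻¹ i))`. -/
def signedPerm {n : ℕ} (v : Fin n → ℤˣ) (σ : Perm (Fin n)) (x : Fin n → ℤ) : Fin n → ℤ :=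
  fun i => (v i : ℤ) * x (σ.symm i)

/-- `Λ` is a rank-`n` lattice in `ℤⁿ`: it is spanned by `n` linearly independent
vectors. -/
def IsFullLattice {n : ℕ} (Λ : Submodule ℤ (Fin n → ℤ)) : Prop :=
  ∃ b : Fin n → (Fin n → ℤ), LinearIndependent ℤ b ∧ Λ = Submodule.span ℤ (Set.range b)

/-- The scaling of a lattice by an integer `s`. -/
def scl {n : ℕ} (s : ℤ) (p : Submodule ℤ (Fin n → ℤ)) : Submodule ℤ (Fin n → ℤ) :=
  p.map (s • (LinearMap.id : (Fin n → ℤ) →ₗ[ℤ] (Fin n → ℤ)))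

/-- The lattice `Dₙ` of integer vectors with even coordinate sum. -/
def Dlat (n : ℕ) : Submodule ℤ (Fin n → ℤ) where
  carrier := {x | (2 : ℤ) ∣ ∑ i, x i}
  add_mem' := by
    intro a b ha hb
    simpa [Finset.sum_add_distrib] using dvd_add ha hb
  zero_mem' := by simp
  smul_mem' := by
    intro c x hx
    simpa [Finset.mul_sum] using hx.mul_left c

/-- The lattice of integer vectors all of whose coordinates have the same parity. -/
def sameParity (n : ℕ) : Submodule ℤ (Fin n → ℤ) where
  carrier := {x | ∀ i j, (2 : ℤ) ∣ (x i - x j)}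
  add_mem' := by
    intro a b ha hb i j
    have := dvd_add (ha i j) (hb i j)
    simpa [Pi.add_apply, add_sub_add_comm] using this
  zero_mem' := by simp
  smul_mem' := by
    intro c x hx i j
    have := (hx i j).mul_left c
    simpa [Pi.smul_apply, smul_eq_mul, mul_sub] using this

/-- The basis of the lattice `Λ₀`: `v₁ = (1,…,1)` and, for `2 ≤ k ≤ n`, `v_k` having `-1`
in positions `1` and `k` and `1` elsewhere (`0`-indexed: positions `0` and `k`). -/
def L0basis (n : ℕ) : Fin n → (Fin n → ℤ) :=
  fun k i => if k.val = 0 then 1 else if i.val = 0 ∨ i = k then -1 else 1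

/-- The lattice `Λ₀`. -/
def L0 (n : ℕ) : Submodule ℤ (Fin n → ℤ) := Submodule.span ℤ (Set.range (L0basis n))

/-- The basis of the lattice `Λ₁`: `w_k` has `-1` in position `k` and `1` elsewhere. -/
def L1basis (n : ℕ) : Fin n → (Fin n → ℤ) :=
  fun k i => if i = k then -1 else 1

/-- The lattice `Λ₁`. -/
def L1 (n : ℕ) : Submodule ℤ (Fin n → ℤ) := Submodule.span ℤ (Set.range (L1basis n))

lemma aux_glLin_apply (g : GL (Fin 2) (ZMod 5)) (v : Fin 2 → ZMod 5) :
    glLin g v = (g : Matrix (Fin 2) (Fin 2) (ZMod 5)).mulVec v := by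
  rfl

lemma aux_det_ne {u v : Fin 2 → ZMod 5} (hu : u ≠ 0) (hv : v ≠ 0)
    (h : Projectivization.mk (ZMod 5) u hu ≠ Projectivization.mk (ZMod 5) v hv) :
    u 0 * v 1 - u 1 * v 0 ≠ 0 := by
  intro hd
  apply h
  rw [Projectivization.mk_eq_mk_iff']
  by_cases h0 : v 0 = 0
  · have h1 : v 1 ≠ 0 := by
      intro h1; apply hv; ext i; fin_cases i <;> simp [h0, h1]
    have hu0 : u 0 = 0 := by
      have : u 0 * v 1 = 0 := by rw [h0] at hd; simpa using hd
      exact (mul_eq_zero.1 this).resolve_right h1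
    refine ⟨u 1 / v 1, ?_⟩
    ext i; fin_cases i
    · simp [h0, hu0]
    · simp [h1]
  · refine ⟨u 0 / v 0, ?_⟩
    ext i; fin_cases i
    · simp [h0]
    · simp only [Fin.mk_one, Pi.smul_apply, smul_eq_mul]
      field_simp
      linear_combination hd

lemma aux_std (p q r : ProjLine5) (hpq : p ≠ q) (hpr : p ≠ r) (hqr : q ≠ r)
    (e0 e1 e2 : Fin 2 → ZMod 5) (h0 : e0 ≠ 0) (h1 : e1 ≠ 0) (h2 : e2 ≠ 0)
    (E0 : e0 = ![1, 0]) (E1 : e1 = ![0, 1]) (E2 : e2 = ![1, 1]) :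
    ∃ g : GL (Fin 2) (ZMod 5), glPermHom g (Projectivization.mk _ e0 h0) = p ∧
      glPermHom g (Projectivization.mk _ e1 h1) = q ∧
      glPermHom g (Projectivization.mk _ e2 h2) = r := by
  induction p using Projectivization.ind with | h u hu => ?_
  induction q using Projectivization.ind with | h v hv => ?_
  induction r using Projectivization.ind with | h w hw => ?_
  have d1 := aux_det_ne hu hv hpq
  have d2 := aux_det_ne hu hw hpr
  have d3 := aux_det_ne hv hw hqr
  set a := v 0 * w 1 - v 1 * w 0 with ha
  set b := u 0 * w 1 - u 1 * w 0 with hb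
  set D := u 0 * v 1 - u 1 * v 0 with hD
  let A : Matrix (Fin 2) (Fin 2) (ZMod 5) := !![-a * u 0, b * v 0; -a * u 1, b * v 1]
  have hA : A.det ≠ 0 := by
    have : A.det = -a * b * D := by
      rw [Matrix.det_fin_two]; simp [A]; rw [hD]; ring
    rw [this]
    exact mul_ne_zero (mul_ne_zero (neg_ne_zero.2 d3) d2) d1
  refine ⟨Matrix.GeneralLinearGroup.mkOfDetNeZero A hA, ?_, ?_, ?_⟩
  · refine (Projectivization.mk_eq_mk_iff' _ _ _ _ _).2 ⟨-a, ?_⟩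
    change _ = A.mulVec e0
    subst E0
    ext i; fin_cases i <;> simp [A, Matrix.mulVec, dotProduct]
  · refine (Projectivization.mk_eq_mk_iff' _ _ _ _ _).2 ⟨b, ?_⟩
    change _ = A.mulVec e1
    subst E1
    ext i; fin_cases i <;> simp [A, Matrix.mulVec, dotProduct]
  · refine (Projectivization.mk_eq_mk_iff' _ _ _ _ _).2 ⟨D, ?_⟩
    change _ = A.mulVec e2
    subst E2
    ext i; fin_cases i <;> simp [A, Matrix.mulVec, dotProduct, ha, hb, hD] <;> ring

lemma aux_three (p q r p' q' r' : ProjLine5) (hpq : p ≠ q) (hpr : p ≠ r) (hqr : q ≠ r)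
    (hpq' : p' ≠ q') (hpr' : p' ≠ r') (hqr' : q' ≠ r') :
    ∃ g : GL (Fin 2) (ZMod 5), glPermHom g p = p' ∧ glPermHom g q = q' ∧
      glPermHom g r = r' := by
  have h0 : (![1, 0] : Fin 2 → ZMod 5) ≠ 0 := by decide
  have h1 : (![0, 1] : Fin 2 → ZMod 5) ≠ 0 := by decide
  have h2 : (![1, 1] : Fin 2 → ZMod 5) ≠ 0 := by decide
  obtain ⟨g, a, b, c⟩ := aux_std p q r hpq hpr hqr _ _ _ h0 h1 h2 rfl rfl rfl
  obtain ⟨g', a', b', c'⟩ := aux_std p' q' r' hpq' hpr' hqr' _ _ _ h0 h1 h2 rfl rfl rfl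
  refine ⟨g' * g⁻¹, ?_, ?_, ?_⟩
  · rw [← a, ← a']; simp
  · rw [← b, ← b']; simp
  · rw [← c, ← c']; simp

lemma aux_trans (f : Fin 6 ≃ ProjLine5) (i j k i' j' k' : Fin 6)
    (hij : i ≠ j) (hik : i ≠ k) (hjk : j ≠ k)
    (hij' : i' ≠ j') (hik' : i' ≠ k') (hjk' : j' ≠ k') :
    ∃ σ ∈ pglSubgroup f, σ i = i' ∧ σ j = j' ∧ σ k = k' := by
  obtain ⟨g, a, b, c⟩ := aux_three (f i) (f j) (f k) (f i') (f j') (f k')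
    (f.injective.ne hij) (f.injective.ne hik) (f.injective.ne hjk)
    (f.injective.ne hij') (f.injective.ne hik') (f.injective.ne hjk')
  refine ⟨_root_.permCongrHom f.symm (glPermHom g), ⟨_, ⟨g, rfl⟩, rfl⟩, ?_, ?_, ?_⟩ <;>
    simp [_root_.permCongrHom, a, b, c]

lemma aux_trans2 (f : Fin 6 ≃ ProjLine5) (i j i' j' : Fin 6)
    (hij : i ≠ j) (hij' : i' ≠ j') :
    ∃ σ ∈ pglSubgroup f, σ i = i' ∧ σ j = j' := by
  have key : ∀ i j : Fin 6, ∃ k, i ≠ k ∧ j ≠ k := by decide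
  obtain ⟨k, h1, h2⟩ := key i j
  obtain ⟨k', h1', h2'⟩ := key i' j'
  obtain ⟨σ, h, a, b, -⟩ := aux_trans f i j k i' j' k' hij h1 h2 hij' h1' h2'
  exact ⟨σ, h, a, b⟩

lemma aux_trans1 (f : Fin 6 ≃ ProjLine5) (i i' : Fin 6) :
    ∃ σ ∈ pglSubgroup f, σ i = i' := by
  have key : ∀ i : Fin 6, ∃ k, i ≠ k := by decide
  obtain ⟨k, h1⟩ := key i
  obtain ⟨k', h1'⟩ := key i'
  obtain ⟨σ, h, a, -⟩ := aux_trans2 f i k i' k' h1 h1'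
  exact ⟨σ, h, a⟩

/-- Sets of size one, two or three can be moved by one exchange. -/
lemma aux_exchange (f : Fin 6 ≃ ProjLine5) (S : Finset (Fin 6)) (h1 : 1 ≤ S.card)
    (h3 : S.card ≤ 3) :
    ∃ σ ∈ pglSubgroup f, ∃ a d, a ∈ S ∧ d ∉ S ∧
      ∀ i, (σ.symm i ∈ S ↔ (i = d ∨ (i ∈ S ∧ i ≠ a))) := by
  have hd : ∃ d, d ∉ S := by
    by_contra! h
    have : S = Finset.univ := Finset.eq_univ_iff_forall.2 h
    rw [this] at h3
    simp at h3
  obtain ⟨d, hd⟩ := hd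
  have hc : S.card = 1 ∨ S.card = 2 ∨ S.card = 3 := by omega
  rcases hc with h | h | h
  · obtain ⟨a, rfl⟩ := Finset.card_eq_one.1 h
    obtain ⟨σ, hσ, e⟩ := aux_trans1 f a d
    refine ⟨σ, hσ, a, d, by simp, hd, fun i => ?_⟩
    simp only [Finset.mem_singleton, Equiv.symm_apply_eq, e] at *
    tauto
  · obtain ⟨a, b, hab, rfl⟩ := Finset.card_eq_two.1 h
    simp only [Finset.mem_insert, Finset.mem_singleton, not_or] at hd
    obtain ⟨σ, hσ, e, e'⟩ := aux_trans2 f a b d b hab hd.2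
    refine ⟨σ, hσ, a, d, by simp, by simpa using hd, fun i => ?_⟩
    simp only [Finset.mem_insert, Finset.mem_singleton, Equiv.symm_apply_eq, e, e'] at *
    grind
  · obtain ⟨a, b, c, hab, hac, hbc, rfl⟩ := Finset.card_eq_three.1 h
    simp only [Finset.mem_insert, Finset.mem_singleton, not_or] at hd
    obtain ⟨σ, hσ, e, e', e''⟩ := aux_trans f a b c d b c hab hac hbc hd.2.1 hd.2.2 hbc
    refine ⟨σ, hσ, a, d, by simp, by simpa using hd, fun i => ?_⟩
    simp only [Finset.mem_insert, Finset.mem_singleton, Equiv.symm_apply_eq, e, e', e''] at *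
    grind

/-- Classification of the lattices between `2ℤ⁶` and `ℤ⁶`. -/
lemma aux_class (f : Fin 6 ≃ ProjLine5) (M : Submodule ℤ (Fin 6 → ℤ))
    (hperm : ∀ σ ∈ pglSubgroup f, ∀ x ∈ M, (fun i => x (σ.symm i)) ∈ M)
    (h2 : ∀ x : Fin 6 → ℤ, (∀ i, (2 : ℤ) ∣ x i) → x ∈ M)
    (hy : ∃ y ∈ M, y 0 = 1) :
    M = ⊤ ∨ M = Dlat 6 ∨ M = sameParity 6 := by
  have hcong : ∀ x y : Fin 6 → ℤ, x ∈ M → (∀ i, (2 : ℤ) ∣ y i - x i) → y ∈ M := by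
    intro x y hx h
    have := M.add_mem hx (h2 (y - x) h)
    simpa using this
  by_cases hc : ∀ y ∈ M, ∀ i j, (2 : ℤ) ∣ y i - y j
  · right; right
    apply le_antisymm
    · intro y hy; exact hc y hy
    · intro z hz
      obtain ⟨y, hyM, hy0⟩ := hy
      refine hcong (z 0 • y) z (M.smul_mem _ hyM) fun i => ?_
      have e1 := hz i 0
      have e2 := (hc y hyM i 0).mul_left (z 0)
      have := dvd_sub e1 e2
      rw [hy0] at this
      simp only [Pi.smul_apply, smul_eq_mul]
      have e3 : z i - z 0 * y i = z i - z 0 - z 0 * (y i - 1) := by ring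
      rw [e3]
      exact this
  · push Not at hc
    obtain ⟨y, hyM, i₀, j₀, hij⟩ := hc
    -- a minority class
    have hS : ∃ S : Finset (Fin 6), 1 ≤ S.card ∧ S.card ≤ 3 ∧ ∃ t : ℤ,
        ∀ i, i ∈ S ↔ (2 : ℤ) ∣ y i - t := by
      classical
      let S0 : Finset (Fin 6) := Finset.univ.filter fun i => (2 : ℤ) ∣ y i
      let S1 : Finset (Fin 6) := Finset.univ.filter fun i => ¬ (2 : ℤ) ∣ y i
      have hsum : S0.card + S1.card = 6 := by
        have := Finset.card_filter_add_card_filter_not (s := (Finset.univ : Finset (Fin 6)))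
          (fun i => (2 : ℤ) ∣ y i)
        exact this.trans (by simp)
      have p0 : 1 ≤ S0.card := by
        apply Finset.card_pos.2
        by_cases h : (2 : ℤ) ∣ y i₀
        · exact ⟨i₀, by simp [S0, h]⟩
        · exact ⟨j₀, by simp only [S0, Finset.mem_filter, Finset.mem_univ, true_and]; omega⟩
      have p1 : 1 ≤ S1.card := by
        apply Finset.card_pos.2
        by_cases h : (2 : ℤ) ∣ y i₀
        · exact ⟨j₀, by simp only [S1, Finset.mem_filter, Finset.mem_univ, true_and]; omega⟩
        · exact ⟨i₀, Finset.mem_filter.2 ⟨Finset.mem_univ _, h⟩⟩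
      by_cases h : S0.card ≤ 3
      · exact ⟨S0, p0, h, 0, fun i => by simp [S0]⟩
      · refine ⟨S1, p1, by omega, 1, fun i => ?_⟩
        simp only [S1, Finset.mem_filter, Finset.mem_univ, true_and]; omega
    obtain ⟨S, hS1, hS3, t, hSt⟩ := hS
    obtain ⟨σ, hσ, a, d, haS, hdS, hex⟩ := aux_exchange f S hS1 hS3
    have had : a ≠ d := fun h => hdS (h ▸ haS)
    have hpair : (Pi.single a 1 + Pi.single d 1 : Fin 6 → ℤ) ∈ M := by
      refine hcong _ _ (M.sub_mem (hperm σ hσ y hyM) hyM) fun i => ?_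
      have e := hex i
      rw [hSt, hSt] at e
      rw [hSt] at haS hdS
      simp only [Pi.add_apply, Pi.sub_apply]
      by_cases hia : i = a
      · subst hia
        simp only [Pi.single_eq_same, Pi.single_eq_of_ne had]
        have : ¬ (2 : ℤ) ∣ y (σ.symm i) - t := by simp [e, had]
        omega
      · by_cases hid : i = d
        · subst hid
          simp only [Pi.single_eq_same, Pi.single_eq_of_ne had.symm]
          have : (2 : ℤ) ∣ y (σ.symm i) - t := by simp [e]
          omega
        · simp only [Pi.single_eq_of_ne hia, Pi.single_eq_of_ne hid]
          simp only [hid, hia, false_or, ne_eq, not_false_eq_true, and_true] at e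
          omega
    have hall : ∀ i, i ≠ 0 → (Pi.single i 1 + Pi.single 0 1 : Fin 6 → ℤ) ∈ M := by
      intro i hi
      obtain ⟨τ, hτ, e, e'⟩ := aux_trans2 f a d i 0 had hi
      have := hperm τ hτ _ hpair
      convert this using 1
      ext k
      simp only [Pi.add_apply, Pi.single_apply, Equiv.symm_apply_eq, e, e']
    have hD : Dlat 6 ≤ M := by
      intro z hz
      have hz' : (2 : ℤ) ∣ ∑ i, z i := hz
      have m : ∀ i ∈ (Finset.univ : Finset (Fin 6)).erase 0,
          z i • (Pi.single i 1 + Pi.single 0 1 : Fin 6 → ℤ) ∈ M := fun i hi =>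
        M.smul_mem _ (hall i (Finset.ne_of_mem_erase hi))
      refine hcong _ z (M.sum_mem m) fun k => ?_
      have hs : (Finset.univ : Finset (Fin 6)).erase 0 = {1, 2, 3, 4, 5} := by decide
      rw [hs]
      simp only [Fin.sum_univ_six] at hz'
      fin_cases k <;> simp [Pi.single_apply] <;> omega
    by_cases hodd : M ≤ Dlat 6
    · exact Or.inr (Or.inl (le_antisymm hodd hD))
    · left
      obtain ⟨w, hwM, hw⟩ := SetLike.not_le_iff_exists.1 hodd
      have hw' : ¬ (2 : ℤ) ∣ ∑ i, w i := hw
      rw [eq_top_iff]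
      intro z _
      by_cases hz : z ∈ Dlat 6
      · exact hD hz
      · have hz' : ¬ (2 : ℤ) ∣ ∑ i, z i := hz
        have : z - w ∈ Dlat 6 := by
          change (2 : ℤ) ∣ ∑ i, (z - w) i
          simp only [Pi.sub_apply, Finset.sum_sub_distrib]
          omega
        simpa using M.add_mem (hD this) hwM

/-- A full-rank lattice `Λ ⊆ ℤ⁶` invariant under `C₂⁶ ⋊ PGL₂(5)` (all sign changes
together with the copy of `PGL₂(5)` in `S₆` permuting the coordinates as the projective
line over `GF(5)`) is `s·ℤ⁶`, `s·D₆` or `s·{x : all coordinates of equal parity}` for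
some positive integer `s`. -/
theorem lattices_invariant_under_C2PGL25 (f : Fin 6 ≃ ProjLine5)
    (Λ : Submodule ℤ (Fin 6 → ℤ)) (hfull : IsFullLattice Λ)
    (hinv : ∀ (v : Fin 6 → ℤˣ) (σ : Perm (Fin 6)), σ ∈ pglSubgroup f →
      ∀ x ∈ Λ, signedPerm v σ x ∈ Λ) :
    ∃ s : ℤ, 0 < s ∧
      (Λ = scl s ⊤ ∨ Λ = scl s (Dlat 6) ∨ Λ = scl s (sameParity 6)) := by
  classical
  have hperm : ∀ σ ∈ pglSubgroup f, ∀ x ∈ Λ, (fun i => x (σ.symm i)) ∈ Λ := by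
    intro σ hσ x hx
    have := hinv (fun _ => 1) σ hσ x hx
    convert this using 1
    ext i; simp [signedPerm]
  obtain ⟨s₀, hs₀⟩ := (IsPrincipalIdealRing.principal
    (Λ.map (LinearMap.proj (R := ℤ) (φ := fun _ : Fin 6 => ℤ) 0) : Ideal ℤ)).principal
  have hmem : ∀ c : ℤ, (∃ x ∈ Λ, x 0 = c) ↔ s₀ ∣ c := by
    intro c
    rw [← Ideal.mem_span_singleton, ← Ideal.submodule_span_eq, ← hs₀]
    simp [Submodule.mem_map]
  have hne : s₀ ≠ 0 := by
    rintro rfl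
    obtain ⟨b, hb, rfl⟩ := hfull
    apply hb.ne_zero 0
    ext i
    obtain ⟨σ, hσ, e⟩ := aux_trans1 f i 0
    have hx := hperm σ hσ (b 0) (Submodule.subset_span ⟨0, rfl⟩)
    have := (hmem _).1 ⟨_, hx, rfl⟩
    rw [(Equiv.symm_apply_eq σ).2 e.symm] at this
    simpa using this
  have hpos : 0 < |s₀| := abs_pos.2 hne
  generalize hs : |s₀| = s at hpos
  have hmem' : ∀ c : ℤ, (∃ x ∈ Λ, x 0 = c) ↔ s ∣ c := by
    intro c; rw [hmem, ← hs, abs_dvd]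
  have hdiv : ∀ x ∈ Λ, ∀ i, s ∣ x i := by
    intro x hx i
    obtain ⟨σ, hσ, e⟩ := aux_trans1 f i 0
    have hx := hperm σ hσ x hx
    have := (hmem' _).1 ⟨_, hx, rfl⟩
    rw [← e, Equiv.symm_apply_apply] at this
    simpa using this
  refine ⟨s, hpos, ?_⟩
  let M : Submodule ℤ (Fin 6 → ℤ) :=
    Λ.comap (s • (LinearMap.id : (Fin 6 → ℤ) →ₗ[ℤ] (Fin 6 → ℤ)))
  have hM : ∀ x, x ∈ M ↔ s • x ∈ Λ := fun x => Iff.rfl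
  have hΛ : Λ = scl s M := by
    apply le_antisymm
    · intro x hx
      choose y hy using hdiv x hx
      have hxy : x = s • y := by ext i; simp [hy]
      exact ⟨y, (hM y).2 (hxy ▸ hx), hxy.symm⟩
    · rintro _ ⟨y, hy, rfl⟩
      exact hy
  obtain ⟨x₀, hx₀, hx₀s⟩ := (hmem' s).2 dvd_rfl
  have h20 : (2 : ℤ) • (Pi.single 0 1 : Fin 6 → ℤ) ∈ M := by
    rw [hM]
    have h1 := hinv (fun i => if i = 0 then -1 else 1) 1 (one_mem _) x₀ hx₀
    have h2 := Λ.sub_mem hx₀ h1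
    convert h2 using 1
    have e1 : ∀ k : Fin 6, (Equiv.symm (1 : Perm (Fin 6))) k = k := fun k => rfl
    ext i
    by_cases hi : i = 0
    · subst hi; simp [signedPerm, hx₀s, e1]; ring
    · simp [signedPerm, hi, e1]
  have hMperm : ∀ σ ∈ pglSubgroup f, ∀ x ∈ M, (fun i => x (σ.symm i)) ∈ M := by
    intro σ hσ x hx
    exact hperm σ hσ _ hx
  have h2i : ∀ i, (2 : ℤ) • (Pi.single i 1 : Fin 6 → ℤ) ∈ M := by
    intro i
    obtain ⟨σ, hσ, e⟩ := aux_trans1 f 0 i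
    have := hMperm σ hσ _ h20
    convert this using 1
    ext k
    simp only [Pi.smul_apply, Pi.single_apply, Equiv.symm_apply_eq, e]
  have hcl := aux_class f M hMperm
    (by
      intro x hx
      choose y hy using hx
      have hxy : x = ∑ i, y i • ((2 : ℤ) • (Pi.single i 1 : Fin 6 → ℤ)) := by
        ext k
        simp [Finset.sum_apply, Pi.single_apply, hy k, mul_comm]
      rw [hxy]
      exact M.sum_mem fun i _ => M.smul_mem _ (h2i i))
    (by
      rw [hΛ] at hx₀
      obtain ⟨y, hy, rfl⟩ := hx₀
      refine ⟨y, hy, ?_⟩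
      have : s * y 0 = s * 1 := by simpa using hx₀s
      exact mul_left_cancel₀ hpos.ne' this)
  rcases hcl with h | h | h
  · left; rw [hΛ, h]
  · right; left; rw [hΛ, h]
  · right; right; rw [hΛ, h]
end
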